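/- Let β > 0 and let m ≥ 1 be an integer. There exists K > 0 depending only on m and β such that for all integers n ≥ 1, |E[Σ_{1≤a<b<c≤n} m(a,b)·m(b,c)] − m²·n| ≤ K · n^{2/(2+β)}. -/

import Mathlib

open Finset

/-- A parent sequence of length `N`: for each `t ∈ {2,…,N}` an index `f t ∈ {1,…,t-1}`. -/
def ParentSeq (N : ℕ) : Type :=
  ∀ t : Set.Icc 2 N, Set.Icc 1 ((t : ℕ) - 1)

noncomputable instance (N : ℕ) : Fintype (ParentSeq N) := by
  unfold ParentSeq
  classical
  infer_instance

/-- The value of a parent sequence at `j` (junk value `0` outside `{2,…,N}`). -/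
def pval {N : ℕ} (f : ParentSeq N) (j : ℕ) : ℕ :=
  if h : 2 ≤ j ∧ j ≤ N then (f ⟨j, Set.mem_Icc.mpr h⟩ : ℕ) else 0

/-- The degree `d_t(v_i)` of vertex `i` at time `t` in the tree determined by `f`. -/
def deg {N : ℕ} (f : ParentSeq N) (t i : ℕ) : ℕ :=
  ((Finset.Icc 2 t).filter (fun j => pval f j = i)).card + (if 2 ≤ i then 1 else 0)

/-- The Móri probability of the parent sequence `f`. -/
noncomputable def moriP {N : ℕ} (β : ℝ) (f : ParentSeq N) : ℝ :=
  ∏ t ∈ Finset.Icc 2 N, ((deg f (t - 1) (pval f t) : ℝ) + β) / ((2 + β) * ((t : ℝ) - 1) - 2)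

/-- Expectation of `X` under the Móri measure on parent sequences of length `N`. -/
noncomputable def moriE (N : ℕ) (β : ℝ) (X : ParentSeq N → ℝ) : ℝ :=
  ∑ f : ParentSeq N, moriP β f * X f

open Classical in
/-- Probability of an event under the Móri measure on parent sequences of length `N`. -/
noncomputable def moriPr (N : ℕ) (β : ℝ) (p : ParentSeq N → Prop) : ℝ :=
  ∑ f : ParentSeq N, if p f then moriP β f else 0

/-- The index of the merged vertex containing tree vertex `t` when merging in blocks of `m`. -/
def blk (m t : ℕ) : ℕ := (t - 1) / m + 1

/-- The number `m(a,b)` of edges joining `u_a` and `u_b` in the Móri graph `G^n_{m,β}`. -/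
def mult (n m : ℕ) (f : ParentSeq (n * m)) (a b : ℕ) : ℕ :=
  ((Finset.Icc 2 (n * m)).filter (fun t =>
    (blk m t = a ∧ blk m (pval f t) = b) ∨ (blk m t = b ∧ blk m (pval f t) = a))).card

/-- The degree `d(u_i)` of the merged vertex `u_i` in the Móri graph `G^n_{m,β}`
(a loop contributes `2`). -/
def degU (n m : ℕ) (f : ParentSeq (n * m)) (i : ℕ) : ℕ :=
  ((Finset.Icc 2 (n * m)).filter (fun t => blk m t = i)).card +
  ((Finset.Icc 2 (n * m)).filter (fun t => blk m (pval f t) = i)).card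


def validP (p : ℕ → ℕ) (N : ℕ) : Prop := ∀ j, 2 ≤ j → j ≤ N → 1 ≤ p j ∧ p j < j

def dg (p : ℕ → ℕ) (t i : ℕ) : ℕ :=
  ((Finset.Icc 2 t).filter (fun j => p j = i)).card + (if 2 ≤ i then 1 else 0)

theorem deg_eq_dg {N : ℕ} (f : ParentSeq N) (t i : ℕ) : deg f t i = dg (pval f) t i := rfl

theorem validP_pval {N : ℕ} (f : ParentSeq N) : validP (pval f) N := by
  intro j h1 h2
  have := (f ⟨j, Set.mem_Icc.mpr ⟨h1, h2⟩⟩).2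
  rw [Set.mem_Icc] at this
  simp only [pval, h1, h2, and_self, dite_true]
  dsimp only at this
  omega

def extP {N : ℕ} (g : ParentSeq N) (i : Set.Icc 1 N) : ParentSeq (N + 1) := fun t =>
  if h : (t : ℕ) ≤ N then g ⟨t, Set.mem_Icc.mpr ⟨(Set.mem_Icc.mp t.2).1, h⟩⟩
  else ⟨i, by
    have h1 := Set.mem_Icc.mp t.2
    have h2 := Set.mem_Icc.mp i.2
    rw [Set.mem_Icc]; omega⟩

def extEquiv (N : ℕ) (hN : 1 ≤ N) : ParentSeq N × Set.Icc 1 N ≃ ParentSeq (N + 1) where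
  toFun x := extP x.1 x.2
  invFun f := (fun t => f ⟨t, Set.mem_Icc.mpr ⟨(Set.mem_Icc.mp t.2).1,
      (Set.mem_Icc.mp t.2).2.trans (Nat.le_succ N)⟩⟩,
    ⟨f ⟨N + 1, Set.mem_Icc.mpr ⟨by omega, le_refl _⟩⟩, by
      have := Set.mem_Icc.mp (f ⟨N + 1, Set.mem_Icc.mpr ⟨by omega, le_refl _⟩⟩).2
      rw [Set.mem_Icc]; dsimp only at this; omega⟩)
  left_inv := by
    rintro ⟨g, i⟩
    apply Prod.ext
    · funext t
      have := (Set.mem_Icc.mp t.2).2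
      simp [extP, this]
    · apply Subtype.ext
      simp [extP]
  right_inv := by
    intro f
    funext t
    obtain ⟨t, ht⟩ := t
    have ht' := (Set.mem_Icc.mp ht).2
    by_cases h : t ≤ N
    · simp [extP, h]
    · have : t = N + 1 := by omega
      subst this
      apply Subtype.ext
      simp [extP]

theorem pval_extP {N : ℕ} (hN : 1 ≤ N) (g : ParentSeq N) (i : Set.Icc 1 N) :
    pval (extP g i) = Function.update (pval g) (N + 1) (i : ℕ) := by
  funext j
  by_cases hj : j = N + 1
  · subst hj
    simp [pval, extP, hN]
  · rw [Function.update_of_ne hj]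
    by_cases h : 2 ≤ j ∧ j ≤ N
    · have h' : 2 ≤ j ∧ j ≤ N + 1 := by omega
      simp only [pval, h, h', extP, and_self, dite_true]
    · have h' : ¬ (2 ≤ j ∧ j ≤ N + 1) := by omega
      simp only [pval, h, h', dite_false]

theorem dg_update_lt (p : ℕ → ℕ) (N t i k : ℕ) (ht : t ≤ N) :
    dg (Function.update p (N + 1) i) t k = dg p t k := by
  unfold dg
  congr 2
  apply Finset.filter_congr
  intro j hj
  rw [Finset.mem_Icc] at hj
  rw [Function.update_of_ne (by omega)]

theorem dg_update_succ (p : ℕ → ℕ) (N i k : ℕ) (hN : 1 ≤ N) :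
    dg (Function.update p (N + 1) i) (N + 1) k = dg p N k + if i = k then 1 else 0 := by
  rw [← dg_update_lt p N N i k le_rfl]
  unfold dg
  rw [← Finset.insert_Icc_right_eq_Icc_add_one (by omega : 2 ≤ N + 1), Finset.filter_insert]
  simp only [Function.update_self]
  have hn : (N + 1) ∉ (Finset.Icc 2 N).filter (fun j => Function.update p (N + 1) i j = k) := by
    simp
  have hc := Finset.card_insert_of_notMem hn
  by_cases h : i = k
  · simp only [h, if_true] at hc ⊢
    omega
  · simp only [h, if_false]
    omega

theorem moriP_ext {N : ℕ} (hN : 1 ≤ N) (β : ℝ) (g : ParentSeq N) (i : Set.Icc 1 N) :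
    moriP β (extP g i) = moriP β g * (((dg (pval g) N i : ℝ) + β) / ((2 + β) * (N : ℝ) - 2)) := by
  unfold moriP
  rw [← Finset.insert_Icc_right_eq_Icc_add_one (by omega : 2 ≤ N + 1), Finset.prod_insert (by simp), mul_comm]
  simp only [deg_eq_dg, pval_extP hN]
  congr 1
  · apply Finset.prod_congr rfl
    intro t ht
    rw [Finset.mem_Icc] at ht
    rw [Function.update_of_ne (by omega), dg_update_lt _ _ _ _ _ (by omega)]
  · rw [Function.update_self, dg_update_lt _ _ _ _ _ (by omega)]
    simp

theorem moriE_succ (N : ℕ) (hN : 1 ≤ N) (β : ℝ) (F : (ℕ → ℕ) → ℝ) :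
    moriE (N + 1) β (fun f => F (pval f)) = moriE N β (fun g => ∑ i ∈ Finset.Icc 1 N,
      (((dg (pval g) N i : ℝ) + β) / ((2 + β) * (N : ℝ) - 2)) *
        F (Function.update (pval g) (N + 1) i)) := by
  unfold moriE
  rw [← (extEquiv N hN).sum_comp, Fintype.sum_prod_type]
  apply Finset.sum_congr rfl
  intro g _
  rw [Finset.mul_sum, Finset.sum_subtype (p := fun i => i ∈ Set.Icc 1 N) (Finset.Icc 1 N) (by simp)]
  apply Finset.sum_congr rfl
  intro i _
  change moriP β (extP g i) * F (pval (extP g i)) = _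
  rw [moriP_ext hN, pval_extP hN, mul_assoc]

theorem sum_dg (p : ℕ → ℕ) (N : ℕ) (hN : 1 ≤ N) (hp : validP p N) :
    ∑ i ∈ Finset.Icc 1 N, dg p N i = 2 * (N - 1) := by
  unfold dg
  rw [Finset.sum_add_distrib, ← Finset.card_eq_sum_card_fiberwise, Finset.sum_ite]
  · have : (Finset.Icc 1 N).filter (fun i => 2 ≤ i) = Finset.Icc 2 N := by
      ext x; simp; omega
    rw [this]; simp; omega
  · intro j hj
    simp only [Finset.coe_Icc, Set.mem_Icc] at hj ⊢
    have := hp j hj.1 hj.2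
    omega

theorem denom_pos (β : ℝ) (hβ : 0 < β) (N : ℕ) (hN : 1 ≤ N) : 0 < (2 + β) * (N : ℝ) - 2 := by
  have : (1 : ℝ) ≤ N := by exact_mod_cast hN
  nlinarith

theorem sum_prob (β : ℝ) (hβ : 0 < β) (p : ℕ → ℕ) (N : ℕ) (hN : 1 ≤ N) (hp : validP p N) :
    ∑ i ∈ Finset.Icc 1 N, (((dg p N i : ℝ) + β) / ((2 + β) * (N : ℝ) - 2)) = 1 := by
  rw [← Finset.sum_div, Finset.sum_add_distrib, ← Nat.cast_sum, sum_dg p N hN hp,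
    div_eq_one_iff_eq (denom_pos β hβ N hN).ne']
  push_cast [hN]
  simp
  ring

theorem moriP_nonneg {N : ℕ} (β : ℝ) (hβ : 0 < β) (f : ParentSeq N) : 0 ≤ moriP β f := by
  unfold moriP
  apply Finset.prod_nonneg
  intro t ht
  rw [Finset.mem_Icc] at ht
  have := denom_pos β hβ (t - 1) (by omega)
  rw [Nat.cast_sub (by omega)] at this
  push_cast at this
  positivity

theorem moriE_mono {N : ℕ} (β : ℝ) (hβ : 0 < β) (X Y : ParentSeq N → ℝ) (h : ∀ f, X f ≤ Y f) :
    moriE N β X ≤ moriE N β Y :=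
  Finset.sum_le_sum fun f _ => mul_le_mul_of_nonneg_left (h f) (moriP_nonneg β hβ f)

theorem moriE_const (β : ℝ) (hβ : 0 < β) (c : ℝ) (N : ℕ) (hN : 1 ≤ N) :
    moriE N β (fun _ => c) = c := by
  induction N, hN using Nat.le_induction with
  | base =>
    unfold moriE
    have : ∀ f : ParentSeq 1, moriP β f = 1 := by
      intro f; simp [moriP]
    simp only [this]
    have hu : Fintype.card (ParentSeq 1) = 1 := by
      rw [Fintype.card_eq_one_iff]
      refine ⟨fun t => absurd (Set.mem_Icc.mp t.2) (by omega), fun g => ?_⟩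
      funext t
      exact absurd (Set.mem_Icc.mp t.2) (by omega)
    simp [hu]
  | succ N hN ih =>
    rw [moriE_succ N hN β (fun _ => c)]
    simp only [← Finset.sum_mul]
    rw [← ih]
    congr 1
    funext g
    rw [sum_prob β hβ _ N hN (validP_pval g), one_mul, ih]

def Bk (m b : ℕ) : Finset ℕ := Finset.Icc ((b - 1) * m + 1) (b * m)

theorem blk_pos (m t : ℕ) : 1 ≤ blk m t := Nat.le_add_left _ _

theorem mem_Bk (m : ℕ) (hm : 1 ≤ m) (b i : ℕ) (hb : 1 ≤ b) :
    i ∈ Bk m b ↔ 1 ≤ i ∧ blk m i = b := by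
  obtain ⟨c, rfl⟩ : ∃ c, b = c + 1 := ⟨b - 1, by omega⟩
  unfold Bk blk
  rw [Finset.mem_Icc, Nat.add_right_cancel_iff, Nat.div_eq_iff (by omega)]
  simp only [Nat.add_sub_cancel, Nat.add_mul, one_mul]
  generalize c * m = x
  omega

theorem card_Bk (m b : ℕ) (hb : 1 ≤ b) : (Bk m b).card = m := by
  obtain ⟨c, rfl⟩ : ∃ c, b = c + 1 := ⟨b - 1, by omega⟩
  unfold Bk
  rw [Nat.card_Icc]
  simp only [Nat.add_sub_cancel, Nat.add_mul, one_mul]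
  generalize c * m = x
  omega

theorem blk_mono (m s t : ℕ) (h : s ≤ t) : blk m s ≤ blk m t := by
  unfold blk
  have : (s - 1) / m ≤ (t - 1) / m := Nat.div_le_div_right (by omega)
  omega

noncomputable def XX (m : ℕ) (β : ℝ) (N : ℕ) (p : ℕ → ℕ) (b : ℕ) : ℝ :=
  ∑ i ∈ Bk m b, ((dg p N i : ℝ) + β)

noncomputable def ZZ (m : ℕ) (β : ℝ) (N : ℕ) (p : ℕ → ℕ) : ℝ :=
  ∑ s ∈ (Finset.Icc 2 N).filter (fun s => blk m (p s) = blk m s), XX m β N p (blk m s)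

noncomputable def Phi (m : ℕ) (β : ℝ) (N : ℕ) (p : ℕ → ℕ) : ℝ :=
  ZZ m β N p + XX m β N p 1 + (m * (2 + β) + 1) ^ 2

theorem XX_eq (m : ℕ) (hm : 1 ≤ m) (β : ℝ) (N : ℕ) (p : ℕ → ℕ) (hp : validP p N) (b : ℕ)
    (hb : 1 ≤ b) :
    XX m β N p b = (((Finset.Icc 2 N).filter (fun j => blk m (p j) = b)).card : ℝ)
      + ∑ i ∈ Bk m b, (if 2 ≤ i then 1 else 0 : ℝ) + m * β := by
  have h := Finset.card_eq_sum_card_fiberwise (f := p)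
    (s := (Finset.Icc 2 N).filter (fun j => blk m (p j) = b)) (t := Bk m b) (by
      intro j hj
      simp only [Finset.coe_filter, Finset.mem_Icc, Set.mem_ofPred_eq] at hj
      rw [Finset.mem_coe, mem_Bk m hm b _ hb]
      exact ⟨(hp j hj.1.1 hj.1.2).1, hj.2⟩)
  rw [h]
  unfold XX dg
  rw [Finset.sum_add_distrib, Finset.sum_const, card_Bk m b hb, nsmul_eq_mul]
  push_cast
  rw [Finset.sum_add_distrib]
  congr 2
  apply Finset.sum_congr rfl
  intro i hi
  rw [mem_Bk m hm b _ hb] at hi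
  rw [Finset.filter_filter]
  congr 2
  apply Finset.filter_congr
  intro j _
  constructor
  · rintro rfl; exact ⟨hi.2, rfl⟩
  · exact fun h => h.2

theorem XX_ge (m : ℕ) (hm : 1 ≤ m) (β : ℝ) (N : ℕ) (p : ℕ → ℕ) (hp : validP p N) (b : ℕ)
    (hb : 1 ≤ b) :
    (((Finset.Icc 2 N).filter (fun j => blk m (p j) = b)).card : ℝ) + m * β ≤ XX m β N p b := by
  rw [XX_eq m hm β N p hp b hb]
  have : (0:ℝ) ≤ ∑ i ∈ Bk m b, (if 2 ≤ i then 1 else 0 : ℝ) :=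
    Finset.sum_nonneg fun i _ => by split_ifs <;> norm_num
  linarith

theorem XX_nonneg (m : ℕ) (β : ℝ) (hβ : 0 < β) (N : ℕ) (p : ℕ → ℕ) (b : ℕ) :
    0 ≤ XX m β N p b := Finset.sum_nonneg fun i _ => by positivity

theorem XX_le (m : ℕ) (hm : 1 ≤ m) (β : ℝ) (N : ℕ) (p : ℕ → ℕ) (hp : validP p N) :
    XX m β N p (blk m (N + 1)) ≤ m * (2 + β) := by
  have hb := blk_pos m (N + 1)
  rw [XX_eq m hm β N p hp _ hb]
  have h1 : ∑ i ∈ Bk m (blk m (N + 1)), (if 2 ≤ i then 1 else 0 : ℝ) ≤ m := by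
    calc _ ≤ ∑ i ∈ Bk m (blk m (N + 1)), (1 : ℝ) :=
          Finset.sum_le_sum fun i _ => by split_ifs <;> norm_num
      _ = m := by simp [card_Bk m _ hb]
  have h2 : ((Finset.Icc 2 N).filter (fun j => blk m (p j) = blk m (N + 1))).card ≤ m := by
    rw [← card_Bk m _ hb]
    conv_rhs => rw [← card_Bk m _ hb]
    rw [card_Bk m _ hb]
    apply Finset.card_le_card
    intro j hj
    simp only [Finset.mem_filter, Finset.mem_Icc] at hj
    rw [mem_Bk m hm _ _ hb]
    have h3 := hp j hj.1.1 hj.1.2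
    have h4 := blk_mono m (p j) j h3.2.le
    have h5 := blk_mono m j (N + 1) (by omega)
    omega
  have h2' : (((Finset.Icc 2 N).filter (fun j => blk m (p j) = blk m (N + 1))).card : ℝ) ≤ m := by
    exact_mod_cast h2
  linarith

theorem XX_update (m : ℕ) (β : ℝ) (N : ℕ) (hN : 1 ≤ N) (p : ℕ → ℕ) (b i : ℕ) :
    XX m β (N + 1) (Function.update p (N + 1) i) b
      = XX m β N p b + if i ∈ Bk m b then 1 else 0 := by
  unfold XX
  simp only [dg_update_succ p N i _ hN]
  push_cast
  rw [← Finset.sum_ite_eq (Bk m b) i (fun _ => (1 : ℝ)), ← Finset.sum_add_distrib]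
  exact Finset.sum_congr rfl fun k _ => by ring

theorem ZZ_update (m : ℕ) (hm : 1 ≤ m) (β : ℝ) (N : ℕ) (hN : 1 ≤ N) (p : ℕ → ℕ) (hp : validP p N)
    (i : ℕ) (hi : 1 ≤ i) :
    ZZ m β (N + 1) (Function.update p (N + 1) i)
      ≤ ZZ m β N p + ∑ s ∈ (Finset.Icc 2 N).filter (fun s => blk m (p s) = blk m s),
          (if i ∈ Bk m (blk m s) then 1 else 0)
        + (if i ∈ Bk m (blk m (N + 1)) then (m * (2 + β) + 1) else 0) := by
  unfold ZZ
  rw [← Finset.sum_add_distrib]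
  simp only [XX_update m β N hN]
  rw [Finset.sum_filter, Finset.sum_filter,
    ← Finset.insert_Icc_right_eq_Icc_add_one (by omega : 2 ≤ N + 1),
    Finset.sum_insert (by simp), add_comm]
  apply add_le_add
  · apply le_of_eq
    apply Finset.sum_congr rfl
    intro s hs
    rw [Finset.mem_Icc] at hs
    rw [Function.update_of_ne (by omega)]
  · rw [Function.update_self]
    have hX := XX_le m hm β N p hp
    by_cases h : blk m i = blk m (N + 1)
    · have h' : i ∈ Bk m (blk m (N + 1)) := (mem_Bk m hm _ _ (blk_pos _ _)).2 ⟨hi, h⟩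
      simp only [h, h', if_true]
      linarith
    · have h' : i ∉ Bk m (blk m (N + 1)) := fun h' => h ((mem_Bk m hm _ _ (blk_pos _ _)).1 h').2
      simp only [h, h', if_false, le_refl]

theorem sum_prob_Bk (m : ℕ) (β : ℝ) (hβ : 0 < β) (p : ℕ → ℕ) (N : ℕ) (hN : 1 ≤ N) (b : ℕ) (c : ℝ)
    (hc : 0 ≤ c) :
    ∑ i ∈ Finset.Icc 1 N, (((dg p N i : ℝ) + β) / ((2 + β) * (N : ℝ) - 2)) *
      (if i ∈ Bk m b then c else 0) ≤ c * XX m β N p b / ((2 + β) * (N : ℝ) - 2) := by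
  have hA := denom_pos β hβ N hN
  simp only [mul_ite, mul_zero]
  rw [← Finset.sum_filter]
  unfold XX
  rw [Finset.mul_sum, Finset.sum_div]
  calc _ ≤ ∑ i ∈ Bk m b, (((dg p N i : ℝ) + β) / ((2 + β) * (N : ℝ) - 2)) * c := by
        apply Finset.sum_le_sum_of_subset_of_nonneg
        · intro i hi; exact (Finset.mem_filter.1 hi).2
        · intros; positivity
    _ = _ := Finset.sum_congr rfl fun i _ => by ring

theorem Phi_step (m : ℕ) (hm : 1 ≤ m) (β : ℝ) (hβ : 0 < β) (N : ℕ) (hN : 1 ≤ N) (p : ℕ → ℕ)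
    (hp : validP p N) :
    ∑ i ∈ Finset.Icc 1 N, (((dg p N i : ℝ) + β) / ((2 + β) * (N : ℝ) - 2)) *
        Phi m β (N + 1) (Function.update p (N + 1) i)
      ≤ Phi m β N p * (1 + 1 / ((2 + β) * (N : ℝ) - 2)) := by
  have hA := denom_pos β hβ N hN
  set C : ℝ := m * (2 + β) + 1 with hC
  have hC0 : 0 ≤ C := by positivity
  set A := (2 + β) * (N : ℝ) - 2 with hAd
  set S := (Finset.Icc 2 N).filter (fun s => blk m (p s) = blk m s) with hS
  have hX := XX_le m hm β N p hp
  have hpr := sum_prob β hβ p N hN hp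
  rw [← hAd] at hpr
  calc _ ≤ ∑ i ∈ Finset.Icc 1 N, (((dg p N i : ℝ) + β) / A) *
        (Phi m β N p + (∑ s ∈ S, (if i ∈ Bk m (blk m s) then (1:ℝ) else 0)
          + ((if i ∈ Bk m (blk m (N + 1)) then C else 0) + (if i ∈ Bk m 1 then 1 else 0)))) := by
        apply Finset.sum_le_sum
        intro i hi
        apply mul_le_mul_of_nonneg_left _ (by positivity)
        have := ZZ_update m hm β N hN p hp i (Finset.mem_Icc.1 hi).1
        unfold Phi
        rw [XX_update m β N hN]
        linarith
    _ = Phi m β N p + (∑ s ∈ S, ∑ i ∈ Finset.Icc 1 N, (((dg p N i : ℝ) + β) / A) *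
          (if i ∈ Bk m (blk m s) then (1:ℝ) else 0)
          + (∑ i ∈ Finset.Icc 1 N, (((dg p N i : ℝ) + β) / A) *
          (if i ∈ Bk m (blk m (N + 1)) then C else 0) + ∑ i ∈ Finset.Icc 1 N, (((dg p N i : ℝ) + β) / A) *
            (if i ∈ Bk m 1 then 1 else 0))) := by
        simp only [mul_add, Finset.sum_add_distrib, ← Finset.sum_mul, hpr, one_mul]
        congr 2
        rw [Finset.sum_comm]
        simp only [Finset.mul_sum]
    _ ≤ Phi m β N p + (∑ s ∈ S, 1 * XX m β N p (blk m s) / A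
          + (C * XX m β N p (blk m (N + 1)) / A + 1 * XX m β N p 1 / A)) := by
        gcongr
        · exact sum_prob_Bk m β hβ p N hN _ 1 zero_le_one
        · exact sum_prob_Bk m β hβ p N hN _ C hC0
        · exact sum_prob_Bk m β hβ p N hN _ 1 zero_le_one
    _ ≤ Phi m β N p + (∑ s ∈ S, 1 * XX m β N p (blk m s) / A
          + (C * C / A + 1 * XX m β N p 1 / A)) := by
        gcongr
        linarith
    _ = _ := by
        simp only [one_mul]
        rw [← Finset.sum_div]
        unfold Phi ZZ
        rw [← hC, ← hS]
        ring

theorem gamma_step (β : ℝ) (hβ : 0 < β) (N : ℕ) (hN : 3 ≤ N) :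
    (N : ℝ) ^ (2 / (2 + β)) * (1 + 1 / ((2 + β) * (N : ℝ) - 2))
      ≤ ((N + 1 : ℕ) : ℝ) ^ (2 / (2 + β)) := by
  have hA := denom_pos β hβ N (by omega)
  have hN3 : (3 : ℝ) ≤ N := by exact_mod_cast hN
  have hN0 : (0 : ℝ) < N := by linarith
  have h1 : ((N + 1 : ℕ) : ℝ) = N * (1 + 1 / N) := by
    push_cast; field_simp
  rw [h1, Real.mul_rpow hN0.le (by positivity)]
  apply mul_le_mul_of_nonneg_left _ (by positivity)
  have hpos : (0:ℝ) < 1 + 1 / N := by positivity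
  rw [Real.rpow_def_of_pos hpos]
  have h2 := Real.add_one_le_exp (Real.log (1 + 1 / (N : ℝ)) * (2 / (2 + β)))
  have h3 := Real.one_sub_inv_le_log_of_pos hpos
  have h4 : 1 - (1 + 1 / (N : ℝ))⁻¹ = 1 / (N + 1) := by field_simp; ring
  rw [h4] at h3
  have h5 : 1 / (N + 1 : ℝ) * (2 / (2 + β)) ≤ Real.log (1 + 1 / (N : ℝ)) * (2 / (2 + β)) :=
    mul_le_mul_of_nonneg_right h3 (by positivity)
  have h6 : 1 / ((2 + β) * (N : ℝ) - 2) ≤ 1 / (N + 1 : ℝ) * (2 / (2 + β)) := by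
    rw [div_mul_div_comm, div_le_div_iff₀ hA (by positivity)]
    nlinarith
  linarith

theorem EPhi_le (m : ℕ) (hm : 1 ≤ m) (β : ℝ) (hβ : 0 < β) :
    ∃ K : ℝ, 0 < K ∧ ∀ N : ℕ, 1 ≤ N →
      moriE N β (fun f => Phi m β N (pval f)) ≤ K * (N : ℝ) ^ (2 / (2 + β)) := by
  set e : ℕ → ℝ := fun N => moriE N β (fun f => Phi m β N (pval f)) with he
  have hP : ∀ N p, 0 ≤ Phi m β N p := by
    intro N p
    have h1 := XX_nonneg m β hβ N p
    have h2 : 0 ≤ ZZ m β N p := Finset.sum_nonneg fun s _ => h1 _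
    have := h1 1
    unfold Phi
    positivity
  have he0 : ∀ N, 0 ≤ e N := fun N =>
    Finset.sum_nonneg fun f _ => mul_nonneg (moriP_nonneg β hβ f) (hP _ _)
  have hstep : ∀ N, 1 ≤ N → e (N + 1) ≤ e N * (1 + 1 / ((2 + β) * (N : ℝ) - 2)) := by
    intro N hN
    simp only [he]
    rw [moriE_succ N hN β (Phi m β (N + 1))]
    refine (moriE_mono β hβ _ _ fun g => Phi_step m hm β hβ N hN (pval g) (validP_pval g)).trans ?_
    unfold moriE
    rw [Finset.sum_mul]
    simp only [mul_assoc, le_refl]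
  have g0 : 0 ≤ 2 / (2 + β) := by positivity
  refine ⟨e 1 + e 2 + e 3 + 1, by linarith [he0 1, he0 2, he0 3], ?_⟩
  have hone : ∀ N : ℕ, 1 ≤ N → ∀ x, 0 ≤ x → x ≤ x * (N : ℝ) ^ (2 / (2 + β)) := by
    intro N hN x hx
    exact le_mul_of_one_le_right hx (Real.one_le_rpow (by exact_mod_cast hN) g0)
  have h3 : ∀ N : ℕ, 3 ≤ N → e N ≤ (e 1 + e 2 + e 3 + 1) * (N : ℝ) ^ (2 / (2 + β)) := by
    intro N hN
    induction N, hN using Nat.le_induction with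
    | base =>
      exact le_trans (by linarith [he0 1, he0 2, he0 3]) (hone 3 (by norm_num) _ (by linarith [he0 1, he0 2, he0 3]))
    | succ N hN ih =>
      have hA := denom_pos β hβ N (by omega)
      refine (hstep N (by omega)).trans ?_
      refine (mul_le_mul_of_nonneg_right ih (by positivity)).trans ?_
      rw [mul_assoc]
      exact mul_le_mul_of_nonneg_left (gamma_step β hβ N hN) (by linarith [he0 1, he0 2, he0 3])
  intro N hN
  by_cases h : 3 ≤ N
  · exact h3 N h
  · refine le_trans ?_ (hone N hN _ (by linarith [he0 1, he0 2, he0 3]))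
    obtain rfl | rfl : N = 1 ∨ N = 2 := by omega
    · change e 1 ≤ _
      linarith [he0 1, he0 2, he0 3]
    · change e 2 ≤ _
      linarith [he0 1, he0 2, he0 3]

def UU (m N : ℕ) (p : ℕ → ℕ) (b : ℕ) : ℕ :=
  ((Finset.Icc 2 N).filter (fun t => blk m t = b ∧ blk m (p t) < b)).card

def LL (m N : ℕ) (p : ℕ → ℕ) (b : ℕ) : ℕ :=
  ((Finset.Icc 2 N).filter (fun t => blk m t = b ∧ blk m (p t) = b)).card

theorem UU_le (m : ℕ) (hm : 1 ≤ m) (N : ℕ) (p : ℕ → ℕ) (b : ℕ) (hb : 1 ≤ b) : UU m N p b ≤ m := by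
  have h := card_Bk m b hb
  unfold UU
  refine le_trans (Finset.card_le_card ?_) h.le
  intro t ht
  simp only [Finset.mem_filter, Finset.mem_Icc] at ht
  rw [mem_Bk m hm _ _ hb]
  omega

theorem UU_add_LL (m : ℕ) (hm : 1 ≤ m) (n : ℕ) (p : ℕ → ℕ) (hp : validP p (n * m)) (b : ℕ)
    (hb : 2 ≤ b) (hbn : b ≤ n) : m ≤ UU m (n * m) p b + LL m (n * m) p b := by
  have h := card_Bk m b (by omega)
  unfold UU LL
  refine le_trans h.ge (le_trans (Finset.card_le_card ?_) (Finset.card_union_le _ _))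
  intro t ht
  have h1 := (mem_Bk m hm _ _ (by omega)).1 ht
  unfold Bk at ht
  rw [Finset.mem_Icc] at ht
  have h2 : b * m ≤ n * m := Nat.mul_le_mul_right m hbn
  have h3 : 1 * m ≤ (b - 1) * m := Nat.mul_le_mul_right m (by omega)
  have h4 : 2 ≤ t := by omega
  have h5 := hp t h4 (by omega)
  have h6 := blk_mono m (p t) t h5.2.le
  simp only [Finset.mem_union, Finset.mem_filter, Finset.mem_Icc]
  omega

theorem blk_le (m : ℕ) (hm : 1 ≤ m) (n t : ℕ) (hn : 1 ≤ n) (ht : t ≤ n * m) : blk m t ≤ n := by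
  have h1 : blk m t ≤ blk m (n * m) := blk_mono m _ _ ht
  have h2 : n * m ∈ Bk m n := by
    unfold Bk
    rw [Finset.mem_Icc]
    obtain ⟨c, rfl⟩ : ∃ c, n = c + 1 := ⟨n - 1, by omega⟩
    simp only [Nat.add_sub_cancel, Nat.add_mul, one_mul]
    omega
  rw [((mem_Bk m hm _ _ hn).1 h2).2] at h1
  exact h1

theorem mult_eq (n m : ℕ) (f : ParentSeq (n * m)) (a b : ℕ) (hab : a < b) :
    mult n m f a b = ((Finset.Icc 2 (n * m)).filter
      (fun t => blk m t = b ∧ blk m (pval f t) = a)).card := by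
  unfold mult
  congr 1
  apply Finset.filter_congr
  intro t ht
  rw [Finset.mem_Icc] at ht
  have h := validP_pval f t ht.1 ht.2
  have := blk_mono m _ _ h.2.le
  omega

theorem sum_mult_left (n m : ℕ) (f : ParentSeq (n * m)) (b : ℕ) :
    ∑ a ∈ Finset.Ico 1 b, mult n m f a b = UU m (n * m) (pval f) b := by
  unfold UU
  rw [Finset.card_eq_sum_card_fiberwise (f := fun t => blk m (pval f t)) (t := Finset.Ico 1 b)]
  · apply Finset.sum_congr rfl
    intro a ha
    rw [Finset.mem_Ico] at ha
    rw [mult_eq n m f a b ha.2, Finset.filter_filter]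
    congr 1
    apply Finset.filter_congr
    intro t _
    omega
  · intro t ht
    simp only [Finset.coe_filter, Set.mem_ofPred_eq] at ht
    have := blk_pos m (pval f t)
    simp only [Finset.coe_Ico, Set.mem_Ico]
    omega

theorem sum_mult_right (n m : ℕ) (hm : 1 ≤ m) (hn : 1 ≤ n) (f : ParentSeq (n * m)) (b : ℕ) :
    ∑ c ∈ Finset.Ioc b n, mult n m f b c = ((Finset.Icc 2 (n * m)).filter
      (fun t => blk m (pval f t) < blk m t ∧ blk m (pval f t) = b)).card := by
  rw [Finset.card_eq_sum_card_fiberwise (f := fun t => blk m t) (t := Finset.Ioc b n)]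
  · apply Finset.sum_congr rfl
    intro c hc
    rw [Finset.mem_Ioc] at hc
    rw [mult_eq n m f b c hc.1, Finset.filter_filter]
    congr 1
    apply Finset.filter_congr
    intro t _
    omega
  · intro t ht
    simp only [Finset.coe_filter, Set.mem_ofPred_eq, Finset.mem_Icc] at ht
    have := blk_le m hm n t hn ht.1.2
    simp only [Finset.coe_Ioc, Set.mem_Ioc]
    omega

theorem S_eq (n m : ℕ) (hm : 1 ≤ m) (hn : 1 ≤ n) (f : ParentSeq (n * m)) :
    (∑ a ∈ Finset.Icc 1 n, ∑ b ∈ Finset.Ioc a n, ∑ c ∈ Finset.Ioc b n,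
            (mult n m f a b : ℝ) * (mult n m f b c : ℝ))
    = ∑ t ∈ Finset.Icc 2 (n * m), if blk m (pval f t) < blk m t then
        (UU m (n * m) (pval f) (blk m (pval f t)) : ℝ) else 0 := by
  rw [Finset.sum_comm' (t' := Finset.Icc 1 n) (s' := fun b => Finset.Ico 1 b)
    (by intro a b; simp only [Finset.mem_Icc, Finset.mem_Ioc, Finset.mem_Ico]; omega)]
  have h : ∀ b ∈ Finset.Icc 1 n, (∑ a ∈ Finset.Ico 1 b, ∑ c ∈ Finset.Ioc b n,
      (mult n m f a b : ℝ) * (mult n m f b c : ℝ)) =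
      ∑ t ∈ ((Finset.Icc 2 (n * m)).filter (fun t => blk m (pval f t) < blk m t)).filter
        (fun t => blk m (pval f t) = b), (UU m (n * m) (pval f) (blk m (pval f t)) : ℝ) := by
    intro b _
    rw [← Finset.sum_mul_sum, ← Nat.cast_sum, ← Nat.cast_sum, sum_mult_left,
      sum_mult_right n m hm hn, Finset.filter_filter]
    rw [Finset.sum_congr rfl (g := fun _ => (UU m (n * m) (pval f) b : ℝ))
      (by intro t ht; rw [(Finset.mem_filter.1 ht).2.2])]
    rw [Finset.sum_const, nsmul_eq_mul, mul_comm]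
  rw [Finset.sum_congr rfl h, Finset.sum_fiberwise_of_maps_to, Finset.sum_filter]
  intro t ht
  rw [Finset.mem_filter, Finset.mem_Icc] at ht
  have h1 := validP_pval f t ht.1.1 ht.1.2
  rw [Finset.mem_Icc]
  exact ⟨blk_pos _ _, blk_le m hm n _ hn (by omega)⟩

theorem sum_LL (m N : ℕ) (hm : 1 ≤ m) (β : ℝ) (hβ : 0 < β) (p : ℕ → ℕ) (hp : validP p N) :
    ∑ t ∈ Finset.Icc 2 N, (LL m N p (blk m (p t)) : ℝ) ≤ ZZ m β N p := by
  have : ∀ t, (LL m N p (blk m (p t)) : ℝ) =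
      ∑ s ∈ (Finset.Icc 2 N).filter (fun s => blk m (p s) = blk m s),
        if blk m (p t) = blk m s then 1 else 0 := by
    intro t
    unfold LL
    rw [← Finset.sum_filter, Finset.filter_filter, Finset.sum_const, nsmul_eq_mul, mul_one]
    congr 2
    apply Finset.filter_congr
    intro s _
    omega
  simp only [this]
  rw [Finset.sum_comm]
  unfold ZZ
  apply Finset.sum_le_sum
  intro s _
  rw [← Finset.sum_filter, Finset.sum_const, nsmul_eq_mul, mul_one]
  have := XX_ge m hm β N p hp (blk m s) (blk_pos _ _)
  have : 0 ≤ m * β := by positivity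
  linarith

theorem loops_le (m N : ℕ) (hm : 1 ≤ m) (β : ℝ) (hβ : 0 < β) (p : ℕ → ℕ) (hp : validP p N) :
    ∑ t ∈ Finset.Icc 2 N, (if blk m (p t) = blk m t then (m : ℝ) else 0) ≤ ZZ m β N p / β := by
  rw [le_div_iff₀ hβ, ← Finset.sum_filter, Finset.sum_mul]
  unfold ZZ
  apply Finset.sum_le_sum
  intro s _
  have := XX_ge m hm β N p hp (blk m s) (blk_pos _ _)
  have h0 : (0 : ℝ) ≤ (((Finset.Icc 2 N).filter (fun j => blk m (p j) = blk m s)).card : ℝ) :=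
    Nat.cast_nonneg _
  linarith

theorem pointwise (n m : ℕ) (hm : 1 ≤ m) (hn : 1 ≤ n) (β : ℝ) (hβ : 0 < β)
    (f : ParentSeq (n * m)) :
    |(∑ a ∈ Finset.Icc 1 n, ∑ b ∈ Finset.Ioc a n, ∑ c ∈ Finset.Ioc b n,
            (mult n m f a b : ℝ) * (mult n m f b c : ℝ)) - (m : ℝ) ^ 2 * (n : ℝ)|
      ≤ (m + 1 / β + 1) * Phi m β (n * m) (pval f) := by
  rw [S_eq n m hm hn]
  set p := pval f with hpd
  have hp : validP p (n * m) := validP_pval f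
  set N := n * m with hNd
  have hN : 1 ≤ N := Nat.mul_pos hn hm
  have hmN : (m : ℝ) ^ 2 * (n : ℝ) = m + ∑ t ∈ Finset.Icc 2 N, (m : ℝ) := by
    rw [Finset.sum_const, nsmul_eq_mul, Nat.card_Icc]
    have : ((N + 1 - 2 : ℕ) : ℝ) = n * m - 1 := by
      rw [← Nat.cast_mul, ← hNd, show N + 1 - 2 = N - 1 by omega, Nat.cast_sub hN]; simp
    rw [this]; ring
  have key : ∀ t ∈ Finset.Icc 2 N,
      (m : ℝ) ≤ (if blk m (p t) < blk m t then (UU m N p (blk m (p t)) : ℝ) else 0) +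
        ((if blk m (p t) = blk m t then (m : ℝ) else 0) +
        (m * (if blk m (p t) = 1 then 1 else 0) + LL m N p (blk m (p t)))) := by
    intro t ht
    rw [Finset.mem_Icc] at ht
    have h1 := hp t ht.1 ht.2
    have h2 := blk_mono m _ _ h1.2.le
    have h3 := blk_pos m (p t)
    have h4 := blk_le m hm n (p t) hn (by omega)
    have hL : (0 : ℝ) ≤ LL m N p (blk m (p t)) := Nat.cast_nonneg _
    have hU : (0 : ℝ) ≤ UU m N p (blk m (p t)) := Nat.cast_nonneg _
    have hm0 : (0 : ℝ) ≤ m := Nat.cast_nonneg _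
    by_cases c1 : blk m (p t) = blk m t
    · rw [if_neg (by omega), if_pos c1]
      split_ifs <;> linarith
    · rw [if_pos (by omega), if_neg c1]
      by_cases c2 : blk m (p t) = 1
      · rw [if_pos c2]; linarith
      · rw [if_neg c2]
        have := UU_add_LL m hm n p hp (blk m (p t)) (by omega) h4
        have h' : (m : ℝ) ≤ UU m N p (blk m (p t)) + LL m N p (blk m (p t)) := by
          exact_mod_cast this
        linarith
  have key2 : ∀ t ∈ Finset.Icc 2 N,
      (if blk m (p t) < blk m t then (UU m N p (blk m (p t)) : ℝ) else 0) ≤ m := by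
    intro t _
    split_ifs
    · exact_mod_cast UU_le m hm N p _ (blk_pos _ _)
    · exact Nat.cast_nonneg _
  have s1 := Finset.sum_le_sum key
  have s2 := Finset.sum_le_sum key2
  rw [Finset.sum_add_distrib, Finset.sum_add_distrib, Finset.sum_add_distrib, ← Finset.mul_sum] at s1
  have s3 := sum_LL m N hm β hβ p hp
  have s4 := loops_le m N hm β hβ p hp
  have s5 := XX_ge m hm β N p hp 1 le_rfl
  have s6 : ∑ t ∈ Finset.Icc 2 N, (if blk m (p t) = 1 then (1:ℝ) else 0)
      = (((Finset.Icc 2 N).filter (fun j => blk m (p j) = 1)).card : ℝ) := by simp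
  have hm0 : (0 : ℝ) ≤ m := Nat.cast_nonneg _
  have hmβ : 0 ≤ (m : ℝ) * β := by positivity
  have hX := XX_nonneg m β hβ N p 1
  have hZ : 0 ≤ ZZ m β N p := Finset.sum_nonneg fun s _ => XX_nonneg m β hβ N p _
  have s7 : (m : ℝ) * ∑ t ∈ Finset.Icc 2 N, (if blk m (p t) = 1 then (1:ℝ) else 0)
      ≤ m * XX m β N p 1 := mul_le_mul_of_nonneg_left (by linarith) hm0
  have hC : (1 : ℝ) ≤ (m * (2 + β) + 1) ^ 2 := one_le_pow₀ (by nlinarith)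
  have hPhi : m + ZZ m β N p / β + m * XX m β N p 1 + ZZ m β N p
      ≤ (m + 1 / β + 1) * Phi m β N p := by
    unfold Phi
    set C := ((m : ℝ) * (2 + β) + 1) ^ 2
    set Z := ZZ m β N p
    set X := XX m β N p 1
    have hb : 0 ≤ 1 / β := by positivity
    have e1 : Z / β = 1 / β * Z := by ring
    rw [e1]
    have t1 : (m : ℝ) * 1 ≤ m * C := mul_le_mul_of_nonneg_left hC hm0
    have t2 : 0 ≤ (m : ℝ) * Z := by positivity
    have t3 : 0 ≤ 1 / β * X := by positivity
    have t4 : 0 ≤ 1 / β * C := by positivity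
    nlinarith
  rw [hmN, abs_le]
  constructor <;> linarith

/-- The total number of pairs of adjacent half-edges in `G^n_{m,β}` whose common vertex has
the middle index is `m²·n + O(n^{2/(2+β)})` in expectation. -/
theorem total_adjacent_pairs_middle_index (β : ℝ) (hβ : 0 < β) (m : ℕ) (hm : 1 ≤ m) :
    ∃ K : ℝ, 0 < K ∧ ∀ n : ℕ, 1 ≤ n →
      |moriE (n * m) β
          (fun f => ∑ a ∈ Finset.Icc 1 n, ∑ b ∈ Finset.Ioc a n, ∑ c ∈ Finset.Ioc b n,
            (mult n m f a b : ℝ) * (mult n m f b c : ℝ))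
        - (m : ℝ) ^ 2 * (n : ℝ)| ≤ K * (n : ℝ) ^ (2 / (2 + β)) := by
  obtain ⟨K, hK, h⟩ := EPhi_le m hm β hβ
  have hc : 0 < (m : ℝ) + 1 / β + 1 := by positivity
  have hm' : (0 : ℝ) < m := by exact_mod_cast hm
  refine ⟨(m + 1 / β + 1) * (K * (m : ℝ) ^ (2 / (2 + β))), by positivity, ?_⟩
  intro n hn
  have hN : 1 ≤ n * m := Nat.mul_pos hn hm
  have hE := h (n * m) hN
  rw [← moriE_const β hβ ((m : ℝ) ^ 2 * (n : ℝ)) (n * m) hN]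
  unfold moriE
  rw [← Finset.sum_sub_distrib]
  simp only [← mul_sub]
  refine (Finset.abs_sum_le_sum_abs _ _).trans ?_
  calc _ ≤ ∑ f : ParentSeq (n * m), (m + 1 / β + 1) * (moriP β f * Phi m β (n * m) (pval f)) := by
        apply Finset.sum_le_sum
        intro f _
        rw [abs_mul, abs_of_nonneg (moriP_nonneg β hβ f), mul_left_comm]
        exact mul_le_mul_of_nonneg_left (pointwise n m hm hn β hβ f) (moriP_nonneg β hβ f)
    _ = (m + 1 / β + 1) * moriE (n * m) β (fun f => Phi m β (n * m) (pval f)) := by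
        unfold moriE
        rw [Finset.mul_sum]
    _ ≤ (m + 1 / β + 1) * (K * ((n * m : ℕ) : ℝ) ^ (2 / (2 + β))) :=
        mul_le_mul_of_nonneg_left hE hc.le
    _ = _ := by
        push_cast
        rw [Real.mul_rpow (by positivity) (by positivity)]
        ring
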